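/- Let μ₀ be a measure on a measurable space X, let γ > 0 and k > 0 be real numbers, N a positive integer, f₁, …, f_N : X → ℂ measurable, and v : X → ℝ measurable. Let C be an invertible N×N complex matrix and set g_i := ∑_{l=1}^N C_{il} f_l. Assume ρ_g := N^{−1} ∑_{i=1}^N |g_i|² is strictly positive μ₀-almost everywhere, set u_g := k^{−1} log ρ_g, and assume c := ∫_X exp(−(γ u_g + (1−γ)v)) dμ₀ lies in (0,∞). Then Z := ∫_{X^N} |det[(f_i(x_j))_{i,j}]|^{−2γ/k} · exp(−(1−γ)(v(x₁)+⋯+v(x_N))) dμ₀^{⊗N} satisfies Z ≥ (N!)^{−γ/k} · |det C|^{2γ/k} · c^N. -/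

import Mathlib

open MeasureTheory ENNReal Matrix


lemma sigmaFinite_of_pos_lintegral {X : Type*} [MeasurableSpace X] (μ : Measure X)
    (h : X → ℝ≥0∞) (hm : Measurable h) (h0 : ∀ x, h x ≠ 0) (ht : ∀ x, h x ≠ ⊤)
    (hi : ∫⁻ x, h x ∂μ ≠ ⊤) : SigmaFinite μ := by
  have hfin : IsFiniteMeasure (μ.withDensity h) := isFiniteMeasure_withDensity hi
  have := withDensity_inv_same (μ := μ) hm (ae_of_all _ h0) (ae_of_all _ ht)
  rw [← this]
  exact SigmaFinite.withDensity_of_ne_top (ae_of_all _ (fun x => by simp [h0 x]))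

lemma det_mul_conj_det {N : ℕ} {X : Type*} (G : Fin N → X → ℂ) (x : Fin N → X) :
    (Matrix.of fun i j => G i (x j)).det * (starRingEnd ℂ) (Matrix.of fun i j => G i (x j)).det
     = ∑ σ : Equiv.Perm (Fin N), ∑ τ : Equiv.Perm (Fin N),
        ((Equiv.Perm.sign σ : ℤ) : ℂ) * ((Equiv.Perm.sign τ : ℤ) : ℂ) *
          ∏ j, (G (σ j) (x j) * (starRingEnd ℂ) (G (τ j) (x j))) := by
  rw [Matrix.det_apply', map_sum, Finset.sum_mul_sum]
  refine Finset.sum_congr rfl fun σ _ => Finset.sum_congr rfl fun τ _ => ?_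
  simp only [Matrix.of_apply, map_mul, map_prod, map_intCast, Finset.prod_mul_distrib]
  ring

lemma sum_sum_sign {N : ℕ} (M : Matrix (Fin N) (Fin N) ℂ) :
    ∑ σ : Equiv.Perm (Fin N), ∑ τ : Equiv.Perm (Fin N),
        ((Equiv.Perm.sign σ : ℤ) : ℂ) * ((Equiv.Perm.sign τ : ℤ) : ℂ) *
          ∏ j, M (σ j) (τ j) = (N.factorial : ℂ) * M.det := by
  have h : ∀ σ : Equiv.Perm (Fin N), ∑ τ : Equiv.Perm (Fin N),
        ((Equiv.Perm.sign σ : ℤ) : ℂ) * ((Equiv.Perm.sign τ : ℤ) : ℂ) *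
          ∏ j, M (σ j) (τ j) = M.det := by
    intro σ
    have h1 := Matrix.det_permute σ M
    rw [← Matrix.det_transpose (M.submatrix _ _), Matrix.det_apply'] at h1
    simp only [mul_assoc]
    rw [← Finset.mul_sum]
    simp only [Matrix.transpose_apply, Matrix.submatrix_apply, id] at h1
    rw [h1, ← mul_assoc]
    rcases Int.units_eq_one_or (Equiv.Perm.sign σ) with h | h <;> simp [h]
  rw [Finset.sum_congr rfl (fun σ _ => h σ)]
  simp [Fintype.card_perm]

lemma andreief {N : ℕ} {X : Type*} [MeasurableSpace X] (μ : Measure X) [SigmaFinite μ]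
    (G : Fin N → X → ℂ) (hG : ∀ i, MemLp (G i) 2 μ) :
    Integrable (fun x : Fin N → X => (Matrix.of fun i j => G i (x j)).det *
      (starRingEnd ℂ) (Matrix.of fun i j => G i (x j)).det) (Measure.pi fun _ => μ) ∧
    ∫ x : Fin N → X, (Matrix.of fun i j => G i (x j)).det *
      (starRingEnd ℂ) (Matrix.of fun i j => G i (x j)).det ∂(Measure.pi fun _ => μ) =
    (N.factorial : ℂ) * (Matrix.of fun i l => ∫ x, G i x * (starRingEnd ℂ) (G l x) ∂μ).det := by
  have hI : ∀ i l, Integrable (fun x => G i x * (starRingEnd ℂ) (G l x)) μ := fun i l =>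
    (hG i).integrable_mul (hG l).star
  have hP : ∀ σ τ : Equiv.Perm (Fin N), Integrable (fun x : Fin N → X =>
      ((Equiv.Perm.sign σ : ℤ) : ℂ) * ((Equiv.Perm.sign τ : ℤ) : ℂ) *
          ∏ j, (G (σ j) (x j) * (starRingEnd ℂ) (G (τ j) (x j)))) (Measure.pi fun _ => μ) := by
    intro σ τ
    refine Integrable.const_mul ?_ _
    exact Integrable.fintype_prod (f := fun j y => G (σ j) y * (starRingEnd ℂ) (G (τ j) y))
      (fun j => hI _ _)
  simp only [det_mul_conj_det]
  constructor
  · exact integrable_finsetSum _ fun σ _ => integrable_finsetSum _ fun τ _ => hP σ τ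
  · rw [integral_finsetSum _ (fun σ _ => integrable_finsetSum _ fun τ _ => hP σ τ),
      ← sum_sum_sign]
    refine Finset.sum_congr rfl fun σ _ => ?_
    rw [integral_finsetSum _ (fun τ _ => hP σ τ)]
    refine Finset.sum_congr rfl fun τ _ => ?_
    rw [integral_const_mul,
      integral_fintype_prod_eq_prod (fun j y => G (σ j) y * (starRingEnd ℂ) (G (τ j) y))]
    rfl

open scoped ComplexOrder in
lemma det_le_one_of_trace {N : ℕ} (M : Matrix (Fin N) (Fin N) ℂ)
    (hM : M.PosSemidef) (ht : M.trace = N) : M.det.re ≤ 1 := by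
  have h1 := hM.1.det_eq_prod_eigenvalues
  have h2 := hM.1.trace_eq_sum_eigenvalues
  rw [ht] at h2
  have h2' : ∑ i, hM.1.eigenvalues i = (N : ℝ) := by
    have := congrArg Complex.re h2
    simpa using this.symm
  have h1' : M.det.re = ∏ i, hM.1.eigenvalues i := by
    rw [h1]
    have := Complex.ofReal_prod Finset.univ hM.1.eigenvalues
    exact (congrArg Complex.re this.symm).trans (Complex.ofReal_re _)
  rw [h1']
  calc ∏ i, hM.1.eigenvalues i ≤ ∏ i, Real.exp (hM.1.eigenvalues i - 1) :=
        Finset.prod_le_prod (fun i _ => hM.eigenvalues_nonneg i) (fun i _ => by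
          have := Real.add_one_le_exp (hM.1.eigenvalues i - 1)
          linarith)
    _ = 1 := by
        rw [← Real.exp_sum, Finset.sum_sub_distrib, h2']
        simp

open scoped ComplexOrder in
lemma gram_posSemidef {N : ℕ} {X : Type*} [MeasurableSpace X] (μ : Measure X)
    (G : Fin N → X → ℂ) (hG : ∀ i, MemLp (G i) 2 μ) :
    (Matrix.of fun i l => ∫ x, G i x * (starRingEnd ℂ) (G l x) ∂μ).PosSemidef := by
  have hI : ∀ i l, Integrable (fun x => G i x * (starRingEnd ℂ) (G l x)) μ := fun i l =>
    (hG i).integrable_mul (hG l).star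
  refine PosSemidef.of_dotProduct_mulVec_nonneg ?_ ?_
  · ext i l
    simp only [conjTranspose_apply, of_apply]
    rw [← starRingEnd_apply, ← integral_conj]
    simp [mul_comm]
  · intro a
    have : star a ⬝ᵥ ((Matrix.of fun i l => ∫ x, G i x * (starRingEnd ℂ) (G l x) ∂μ) *ᵥ a) =
        ((∫ x, ‖∑ i, star (a i) * G i x‖ ^ 2 ∂μ : ℝ) : ℂ) := by
      rw [← integral_complex_ofReal]
      simp only [Complex.ofReal_pow, ← Complex.mul_conj', map_sum, map_mul, Finset.sum_mul_sum]
      simp only [dotProduct, mulVec, of_apply, Finset.mul_sum]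
      rw [integral_finsetSum]
      · refine Finset.sum_congr rfl fun i _ => ?_
        rw [integral_finsetSum]
        · refine Finset.sum_congr rfl fun l _ => ?_
          rw [show (fun x => star (a i) * G i x * ((starRingEnd ℂ) (star (a l)) *
            (starRingEnd ℂ) (G l x))) = fun x => (star (a i) * a l) *
              (G i x * (starRingEnd ℂ) (G l x)) from by
                ext x; simp; ring, integral_const_mul]
          simp; ring
        · intro l _
          refine ((hI i l).const_mul (star (a i) * a l)).congr (ae_of_all _ fun x => ?_)
          simp; ring
      · intro i _
        refine integrable_finsetSum _ fun l _ => ?_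
        refine ((hI i l).const_mul (star (a i) * a l)).congr (ae_of_all _ fun x => ?_)
        simp; ring
    rw [this]
    exact Complex.zero_le_real.2 (integral_nonneg fun x => by positivity)

open scoped ComplexOrder in
lemma lintegral_det_le {N : ℕ} {X : Type*} [MeasurableSpace X] (μ : Measure X)
    [SigmaFinite μ] (G : Fin N → X → ℂ) (hG : ∀ i, MemLp (G i) 2 μ)
    (ht : ∫ x, ∑ i, ‖G i x‖ ^ 2 ∂μ = N) :
    ∫⁻ x : Fin N → X, ENNReal.ofReal (‖(Matrix.of fun i j => G i (x j)).det‖ ^ 2)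
      ∂(Measure.pi fun _ => μ) ≤ ENNReal.ofReal N.factorial := by
  obtain ⟨h1, h2⟩ := andreief μ G hG
  have h3 := det_le_one_of_trace _ (gram_posSemidef μ G hG) (by
    simp only [trace, diag, of_apply]
    rw [← integral_finsetSum Finset.univ (f := fun i x => G i x * (starRingEnd ℂ) (G i x))
      (fun i _ => (hG i).integrable_mul (hG i).star)]
    simp only [Complex.mul_conj']
    have := congrArg Complex.ofReal ht
    rw [← integral_complex_ofReal] at this
    simpa using this)
  simp only [Complex.mul_conj'] at h1 h2
  have h1' : Integrable (fun x : Fin N → X => ‖(Matrix.of fun i j => G i (x j)).det‖ ^ 2)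
      (Measure.pi fun _ => μ) := by
    have := h1.re
    refine this.congr (ae_of_all _ fun x => ?_)
    simp [← Complex.ofReal_pow]
  rw [← ofReal_integral_eq_lintegral_ofReal h1' (ae_of_all _ fun x => by positivity)]
  refine ENNReal.ofReal_le_ofReal ?_
  have h4 : ((∫ x : Fin N → X, ‖(Matrix.of fun i j => G i (x j)).det‖ ^ 2
      ∂(Measure.pi fun _ => μ) : ℝ) : ℂ) = (N.factorial : ℂ) *
        (Matrix.of fun i l => ∫ x, G i x * (starRingEnd ℂ) (G l x) ∂μ).det := by
    rw [← integral_complex_ofReal]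
    simpa only [Complex.ofReal_pow] using h2
  have h5 := congrArg Complex.re h4
  rw [Complex.ofReal_re, ← Complex.ofReal_natCast, Complex.re_ofReal_mul] at h5
  rw [h5]
  exact mul_le_of_le_one_right (by positivity) h3

lemma tangent_ineq (s a t : ℝ) (hs : 0 < s) (ha : 0 < a) (ht : 0 < t) :
    (1 + s) * a ^ (-s) ≤ t ^ (-s) + s * a ^ (-s) * (t / a) := by
  have h1 : 1 + s ≤ (t / a) ^ (-s) + s * (t / a) := by
    have hp : 0 < t / a := by positivity
    rw [Real.rpow_def_of_pos hp]
    have e1 := Real.add_one_le_exp (Real.log (t / a) * -s)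
    have e2 := mul_le_mul_of_nonneg_left (Real.log_le_sub_one_of_pos hp) hs.le
    linarith
  have h2 : t ^ (-s) = a ^ (-s) * (t / a) ^ (-s) := by
    rw [← Real.mul_rpow ha.le (by positivity)]
    congr 1; field_simp
  have h3 : 0 < a ^ (-s) := by positivity
  rw [h2]
  nlinarith [mul_le_mul_of_nonneg_left h1 h3.le]

lemma pointwise_ineq (s n d K R H : ℝ) (hs : 0 < s) (hn : 0 < n) (hd : 0 ≤ d) (hK : 0 < K)
    (hR : 0 < R) (hH : 0 < H) :
    ENNReal.ofReal ((1 + s) * n ^ (-s) * K ^ (2 * s) * H) ≤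
      (ENNReal.ofReal d) ^ (-(2 * s)) * ENNReal.ofReal (H * R ^ s) +
      ENNReal.ofReal (s * n ^ (-s) * K ^ (2 * s) * n⁻¹ * ((K * d) ^ 2 * H / R)) := by
  rcases hd.eq_or_lt with rfl | hd
  · have : ENNReal.ofReal (H * R ^ s) ≠ 0 := by
      simp only [ne_eq, ENNReal.ofReal_eq_zero, not_le]; positivity
    rw [ENNReal.ofReal_zero, ENNReal.zero_rpow_of_neg (by linarith), ENNReal.top_mul this]
    simp
  · rw [ENNReal.ofReal_rpow_of_pos hd, ← ENNReal.ofReal_mul (by positivity),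
      ← ENNReal.ofReal_add (by positivity) (by positivity)]
    refine ENNReal.ofReal_le_ofReal ?_
    have h := tangent_ineq s n ((K * d) ^ 2 / R) hs hn (by positivity)
    have h2 : ((K * d) ^ 2 / R) ^ (-s) * K ^ (2 * s) = d ^ (-(2 * s)) * R ^ s := by
      rw [Real.div_rpow (by positivity) hR.le, Real.rpow_neg hR.le, ← Real.rpow_natCast,
        ← Real.rpow_mul (by positivity), Real.mul_rpow hK.le hd.le]
      have : ((2 : ℕ) : ℝ) * -s = -(2 * s) := by push_cast; ring
      rw [this, Real.rpow_neg hK.le]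
      field_simp
    have h3 := mul_le_mul_of_nonneg_right h (show 0 ≤ K ^ (2 * s) * H by positivity)
    calc _ = (1 + s) * n ^ (-s) * (K ^ (2 * s) * H) := by ring
      _ ≤ _ := h3
      _ = (((K * d) ^ 2 / R) ^ (-s) * K ^ (2 * s)) * H +
          s * n ^ (-s) * ((K * d) ^ 2 / R / n) * (K ^ (2 * s) * H) := by ring
      _ = _ := by rw [h2]; ring

/-- Trivialized form of Theorem 3.3: the partition function `Z` is bounded below by
`(N!)^(-γ/k) · |det C|^(2γ/k) · c^N`, where `c` is the integral of
`e^{-(γ u_g + (1-γ) v)}` for the Fubini–Study type potential `u_g = k⁻¹ log ρ_g`. -/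
theorem partition_function_ge_quantized_ding
    {X : Type*} [MeasurableSpace X] (μ₀ : Measure X)
    (γ k : ℝ) (hγ : 0 < γ) (hk : 0 < k)
    (N : ℕ) (hN : 0 < N)
    (f : Fin N → X → ℂ) (hf : ∀ i, Measurable (f i))
    (v : X → ℝ) (hv : Measurable v)
    (C : Matrix (Fin N) (Fin N) ℂ) (hC : IsUnit C.det)
    (g : Fin N → X → ℂ) (hg : g = fun i x => ∑ l, C i l * f l x)
    (ρg : X → ℝ) (hρg : ρg = fun x => (N : ℝ)⁻¹ * ∑ i, ‖g i x‖ ^ 2)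
    (hpos : ∀ᵐ x ∂μ₀, 0 < ρg x)
    (ug : X → ℝ) (hug : ug = fun x => k⁻¹ * Real.log (ρg x))
    (c : ℝ≥0∞)
    (hc : c = ∫⁻ x, ENNReal.ofReal (Real.exp (-(γ * ug x + (1 - γ) * v x))) ∂μ₀)
    (hc0 : 0 < c) (hctop : c < ⊤) :
    (Nat.factorial N : ℝ≥0∞) ^ (-(γ / k)) * (‖C.det‖₊ : ℝ≥0∞) ^ (2 * γ / k) * c ^ N ≤
      ∫⁻ x : Fin N → X,
        (‖(Matrix.of fun i j => f i (x j)).det‖₊ : ℝ≥0∞) ^ (-(2 * γ / k)) *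
          ENNReal.ofReal (Real.exp (-(1 - γ) * ∑ j, v (x j)))
        ∂(Measure.pi fun _ : Fin N => μ₀) := by
  set s : ℝ := γ / k with hs_def
  have hs : 0 < s := div_pos hγ hk
  have h2s : 2 * γ / k = 2 * s := by rw [hs_def]; ring
  rw [h2s]
  have hgm : ∀ i, Measurable (g i) := by
    intro i; rw [hg]; fun_prop
  have hρm : Measurable ρg := by
    rw [hρg]; fun_prop
  have hum : Measurable ug := by
    rw [hug]; fun_prop
  set h : X → ℝ := fun x => Real.exp (-(γ * ug x + (1 - γ) * v x)) with hh_def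
  have hhm : Measurable h := by fun_prop
  have hh0 : ∀ x, 0 < h x := fun x => Real.exp_pos _
  have hσ : SigmaFinite μ₀ := by
    refine sigmaFinite_of_pos_lintegral μ₀ (fun x => ENNReal.ofReal (h x)) (by fun_prop)
      (fun x => by simp [hh0 x]) (fun x => by simp) ?_
    rw [← hc]; exact hctop.ne
  have hhint : Integrable h μ₀ := by
    refine ⟨hhm.aestronglyMeasurable, ?_⟩
    rw [hasFiniteIntegral_iff_ofReal (ae_of_all _ fun x => (hh0 x).le), ← hc]
    exact hctop
  set r : ℝ := ∫ x, h x ∂μ₀ with hr_def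
  have hcr : c = ENNReal.ofReal r := by
    rw [hc, hr_def, ofReal_integral_eq_lintegral_ofReal hhint (ae_of_all _ fun x => (hh0 x).le)]
  have hr : 0 < r := by rwa [hcr, ENNReal.ofReal_pos] at hc0
  set K : ℝ := ‖C.det‖ with hK_def
  have hK : 0 < K := norm_pos_iff.2 hC.ne_zero
  have hNR : (0 : ℝ) < N := by exact_mod_cast hN
  -- the normalized sections
  set q : X → ℝ := fun x => Real.sqrt (h x / (r * ρg x)) with hq_def
  have hqm : Measurable q := by fun_prop
  set G : Fin N → X → ℂ := fun i x => (q x : ℂ) * g i x with hG_def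
  have hGm : ∀ i, Measurable (G i) := fun i => by have := hgm i; fun_prop
  have hρ0 : ∀ x, 0 ≤ ρg x := fun x => by rw [hρg]; positivity
  have hq2 : ∀ x, q x ^ 2 = h x / (r * ρg x) := fun x =>
    Real.sq_sqrt (div_nonneg (hh0 x).le (mul_nonneg hr.le (hρ0 x)))
  have hGsum : ∀ᵐ x ∂μ₀, ∑ i, ‖G i x‖ ^ 2 = N * r⁻¹ * h x := by
    filter_upwards [hpos] with x hx
    have e : ∑ i, ‖g i x‖ ^ 2 = N * ρg x := by
      rw [hρg]; field_simp
    simp only [hG_def, norm_mul, mul_pow, ← Finset.mul_sum, e, Complex.norm_real, Real.norm_eq_abs,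
      sq_abs, hq2]
    field_simp
  have hGL : ∀ i, MemLp (G i) 2 μ₀ := by
    intro i
    rw [memLp_two_iff_integrable_sq_norm (hGm i).aestronglyMeasurable]
    refine (hhint.const_mul (N * r⁻¹)).mono' (by have := hGm i; fun_prop) ?_
    filter_upwards [hGsum] with x hx
    rw [← hx, Real.norm_of_nonneg (by positivity)]
    exact Finset.single_le_sum (f := fun i => ‖G i x‖ ^ 2) (fun _ _ => by positivity)
      (Finset.mem_univ i)
  have hGt : ∫ x, ∑ i, ‖G i x‖ ^ 2 ∂μ₀ = N := by
    rw [integral_congr_ae hGsum, integral_const_mul, ← hr_def]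
    field_simp
  have hdet := lintegral_det_le μ₀ G hGL hGt
  have hposN : ∀ᵐ x ∂(Measure.pi fun _ : Fin N => μ₀), ∀ j, 0 < ρg (x j) :=
    ae_all_iff.2 fun j =>
      (Measure.quasiMeasurePreserving_eval (fun _ : Fin N => μ₀) j).ae hpos
  set n : ℝ := (N.factorial : ℝ) with hn_def
  have hn : 0 < n := by positivity
  set A : ℝ := n ^ (-s) * K ^ (2 * s) * r ^ N with hA_def
  have hA : 0 < A := by positivity
  have hdetG : ∀ x : Fin N → X, ‖(Matrix.of fun i j => G i (x j)).det‖ ^ 2 =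
      (K * ‖(Matrix.of fun i j => f i (x j)).det‖) ^ 2 * (∏ j, h (x j)) /
        (r ^ N * ∏ j, ρg (x j)) := by
    intro x
    have e1 : (Matrix.of fun i j => g i (x j)) = C * Matrix.of fun i j => f i (x j) := by
      ext i j; simp [hg, Matrix.mul_apply]
    have e2 : (Matrix.of fun i j => G i (x j)).det =
        (∏ j, (q (x j) : ℂ)) * (Matrix.of fun i j => g i (x j)).det :=
      Matrix.det_mul_row (fun j => (q (x j) : ℂ)) (Matrix.of fun i j => g i (x j))
    rw [e2, e1, Matrix.det_mul, norm_mul, norm_mul, mul_pow, norm_prod, ← Finset.prod_pow]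
    simp only [Complex.norm_real, Real.norm_eq_abs, sq_abs, hq2]
    rw [Finset.prod_div_distrib, Finset.prod_mul_distrib]
    simp only [Finset.prod_const, Finset.card_univ, Fintype.card_fin]
    ring
  have hpt : ∀ᵐ x ∂(Measure.pi fun _ : Fin N => μ₀),
      ENNReal.ofReal ((1 + s) * n ^ (-s) * K ^ (2 * s) * ∏ j, h (x j)) ≤
        (‖(Matrix.of fun i j => f i (x j)).det‖₊ : ℝ≥0∞) ^ (-(2 * s)) *
          ENNReal.ofReal (Real.exp (-(1 - γ) * ∑ j, v (x j))) +
        ENNReal.ofReal (s * A * n⁻¹) *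
          ENNReal.ofReal (‖(Matrix.of fun i j => G i (x j)).det‖ ^ 2) := by
    filter_upwards [hposN] with x hx
    have hR : 0 < ∏ j, ρg (x j) := Finset.prod_pos fun j _ => hx j
    have e1 : Real.exp (-(1 - γ) * ∑ j, v (x j)) =
        (∏ j, h (x j)) * (∏ j, ρg (x j)) ^ s := by
      rw [← Real.finsetProd_rpow _ _ (fun j _ => (hx j).le), ← Finset.prod_mul_distrib,
        Finset.mul_sum, Real.exp_sum]
      refine Finset.prod_congr rfl fun j _ => ?_
      rw [hh_def, Real.rpow_def_of_pos (hx j), ← Real.exp_add]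
      simp only [hug, hs_def]
      congr 1
      field_simp
      ring
    have := pointwise_ineq s n ‖(Matrix.of fun i j => f i (x j)).det‖ K (∏ j, ρg (x j))
      (∏ j, h (x j)) hs hn (norm_nonneg _) hK hR (Finset.prod_pos fun j _ => hh0 _)
    refine this.trans (le_of_eq ?_)
    rw [e1, ← ENNReal.ofReal_mul (by positivity), hdetG]
    congr 2
    · rw [ofReal_norm]; rfl
    · rw [hA_def]; field_simp
  have hint := lintegral_mono_ae hpt
  have hprodint : Integrable (fun x : Fin N → X => ∏ j, h (x j)) (Measure.pi fun _ => μ₀) :=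
    Integrable.fintype_prod (f := fun _ => h) fun _ => hhint
  have hL : ∫⁻ x : Fin N → X, ENNReal.ofReal ((1 + s) * n ^ (-s) * K ^ (2 * s) * ∏ j, h (x j))
      ∂(Measure.pi fun _ => μ₀) = ENNReal.ofReal A + ENNReal.ofReal (s * A) := by
    rw [← ofReal_integral_eq_lintegral_ofReal (hprodint.const_mul _)
      (ae_of_all _ fun x => mul_nonneg (by positivity) (Finset.prod_nonneg fun j _ => (hh0 _).le)),
      integral_const_mul, integral_fintype_prod_eq_pow h, Fintype.card_fin, ← hr_def,
      ← ENNReal.ofReal_add hA.le (by positivity)]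
    congr 1
    rw [hA_def]; ring
  rw [hL, lintegral_add_right', lintegral_const_mul'] at hint
  · have hlast : ENNReal.ofReal (s * A * n⁻¹) *
        ∫⁻ x : Fin N → X, ENNReal.ofReal (‖(Matrix.of fun i j => G i (x j)).det‖ ^ 2)
          ∂(Measure.pi fun _ => μ₀) ≤ ENNReal.ofReal (s * A) := by
      refine (mul_le_mul_right hdet _).trans (le_of_eq ?_)
      rw [← ENNReal.ofReal_mul (by positivity)]
      congr 1
      field_simp
    have hfin := ENNReal.le_of_add_le_add_right ENNReal.ofReal_ne_top
      (hint.trans (add_le_add_right hlast _))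
    refine le_trans (le_of_eq ?_) hfin
    rw [hA_def, ENNReal.ofReal_mul (by positivity), ENNReal.ofReal_mul (by positivity),
      ← ENNReal.ofReal_rpow_of_pos hn, ← ENNReal.ofReal_rpow_of_pos hK, hcr,
      ENNReal.ofReal_pow hr.le, hn_def, ENNReal.ofReal_natCast, hK_def, ofReal_norm]
    rfl
  · exact ENNReal.ofReal_ne_top
  · refine AEMeasurable.const_mul ?_ _
    refine Measurable.aemeasurable ?_
    simp only [Matrix.det_apply', Matrix.of_apply]
    fun_prop
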